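/- Let L be a first-order language and T a universal L-theory. Let φ(x,y,z) be a quantifier-free L-formula with three free variables. If T ⊨ ∀x ∃y ∀z φ(x,y,z), then there exist k ≥ 1 and L-terms t₁(x), t₂(x,z₁), …, t_k(x,z₁,…,z_{k−1}) (where tᵢ has free variables among x, z₁, …, z_{i−1}) such that T ⊨ ∀x ∀z₁ … ∀z_k [ φ(x, t₁(x), z₁) ∨ φ(x, t₂(x,z₁), z₂) ∨ … ∨ φ(x, t_k(x,z₁,…,z_{k−1}), z_k) ]. -/

import Mathlib

open FirstOrder FirstOrder.Language

universe u v

/-- Herbrand terms: `L`-terms with an extra constant and an extra unary function symbol. -/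
inductive KPTH (L : FirstOrder.Language.{u, v}) : Type u
  | c : KPTH L
  | f : KPTH L → KPTH L
  | func {n : ℕ} (F : L.Functions n) (ts : Fin n → KPTH L) : KPTH L

namespace KPTH

variable {L : FirstOrder.Language.{u, v}}

def size : KPTH L → ℕ
  | c => 0
  | f t => size t + 1
  | func _ ts => Finset.univ.sup fun i => size (ts i)

def toTerm : KPTH L → L.Term (KPTH L)
  | c => Term.var c
  | f t => Term.var (f t)
  | func F ts => Term.func F fun i => toTerm (ts i)

theorem realize_congr {M : Type*} [L.Structure M] (e e' : KPTH L → M) (n : ℕ)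
    (h0 : e c = e' c) (h1 : ∀ s : KPTH L, size s < n → e (f s) = e' (f s)) (t : KPTH L)
    (ht : size t ≤ n) : (toTerm t).realize e = (toTerm t).realize e' := by
  induction t with
  | c => simpa [toTerm] using h0
  | f t _ => simpa [toTerm] using h1 t (by simp only [size] at ht; omega)
  | func F ts ih =>
    simp only [toTerm, Term.realize_func]
    congr 1
    funext i
    refine ih i (le_trans ?_ ht)
    simp only [size]
    exact Finset.le_sup (f := fun i => size (ts i)) (Finset.mem_univ i)

/-- The substructure of values of Herbrand terms. -/
def sub {M : Type*} [L.Structure M] (e : KPTH L → M) : L.Substructure M where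
  carrier := {m | ∃ t : KPTH L, (toTerm t).realize e = m}
  fun_mem := by
    intro n F x hx
    choose ts hts using hx
    refine ⟨func F ts, ?_⟩
    simp only [toTerm, Term.realize_func, hts]

theorem key (T : L.Theory) (hT : T.IsUniversal)
    (φ : L.Formula (Fin 3)) (hφ : φ.IsQF)
    (h : ∀ (M : Type (max u v)) [L.Structure M] [Nonempty M], M ⊨ T →
      ∀ x : M, ∃ y : M, ∀ z : M, φ.Realize ![x, y, z])
    (M : Type (max u v)) [L.Structure M] (hM : M ⊨ T) (e : KPTH L → M) :
    ∃ t : KPTH L, φ.Realize ![e c, (toTerm t).realize e, e (f t)] := by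
  have hc : e c ∈ sub e := ⟨c, rfl⟩
  haveI : Nonempty (sub e) := ⟨⟨e c, hc⟩⟩
  obtain ⟨⟨y, t, rfl⟩, hy⟩ := h (sub e) inferInstance ⟨e c, hc⟩
  refine ⟨t, ?_⟩
  have h2 := hy ⟨e (f t), ⟨f t, rfl⟩⟩
  have h3 := (hφ.realize_embedding (sub e).subtype).2 h2
  unfold Formula.Realize
  convert h3 using 1
  funext i
  fin_cases i <;> rfl

/-- The instance formula. -/
def inst (φ : L.Formula (Fin 3)) (t : KPTH L) : L.Formula (KPTH L) :=
  BoundedFormula.subst φ ![Term.var c, toTerm t, Term.var (f t)]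

theorem realize_inst (φ : L.Formula (Fin 3)) (t : KPTH L) {M : Type*} [L.Structure M]
    (e : KPTH L → M) :
    (inst φ t).Realize e ↔ φ.Realize ![e c, (toTerm t).realize e, e (f t)] := by
  unfold inst Formula.Realize
  rw [BoundedFormula.realize_subst]
  refine iff_of_eq ?_
  congr 1
  funext i
  fin_cases i <;> rfl

theorem compact (T : L.Theory) (φ : L.Formula (Fin 3))
    (h : ∀ (M : Type (max u v)) [L.Structure M], M ⊨ T → ∀ e : KPTH L → M,
      ∃ t : KPTH L, φ.Realize ![e c, (toTerm t).realize e, e (f t)]) :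
    ∃ S : Finset (KPTH L), S.Nonempty ∧
      ∀ (M : Type (max u v)) [L.Structure M], M ⊨ T → ∀ e : KPTH L → M,
      ∃ t ∈ S, φ.Realize ![e c, (toTerm t).realize e, e (f t)] := by
  classical
  let U : KPTH L → L[[KPTH L]].Theory := fun t =>
    (L.lhomWithConstants (KPTH L)).onTheory T ∪ {Formula.equivSentence (inst φ t).not}
  have hU : ¬ Theory.IsSatisfiable (⋃ t, U t) := by
    rintro ⟨M⟩
    letI := (L.lhomWithConstants (KPTH L)).reduct M
    have hM : ∀ t, M ⊨ U t := fun t =>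
      Theory.Model.mono M.is_model (Set.subset_iUnion U t)
    have hMT : M ⊨ T := (LHom.onTheory_model (L.lhomWithConstants (KPTH L)) T).1
      (Theory.Model.mono (hM c) Set.subset_union_left)
    obtain ⟨t, ht⟩ := h M hMT (fun a => (L.con a : M))
    have h1 : M ⊨ Formula.equivSentence (inst φ t).not :=
      (hM t).realize_of_mem _ (Or.inr rfl)
    have h2 := (Formula.realize_equivSentence M _).1 h1
    rw [Formula.realize_not, realize_inst] at h2
    exact h2 ht
  rw [Theory.isSatisfiable_iUnion_iff_isSatisfiable_iUnion_finset] at hU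
  push Not at hU
  obtain ⟨S, hS⟩ := hU
  refine ⟨insert c S, Finset.insert_nonempty _ _, ?_⟩
  intro M _ hM e
  by_contra hcon
  push Not at hcon
  apply hS
  haveI : Nonempty M := ⟨e c⟩
  letI : (constantsOn (KPTH L)).Structure M := constantsOn.structure e
  have : M ⊨ ⋃ t ∈ S, U t := by
    refine ⟨fun ψ hψ => ?_⟩
    simp only [Set.mem_iUnion] at hψ
    obtain ⟨t, htS, hψ | hψ⟩ := hψ
    · exact ((LHom.onTheory_model (L.lhomWithConstants (KPTH L)) T).2 hM).realize_of_mem _ hψ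
    · rw [Set.mem_singleton_iff.1 hψ]
      refine (Formula.realize_equivSentence M _).2 ?_
      rw [Formula.realize_not, realize_inst]
      exact hcon t (Finset.mem_insert_of_mem htS)
  exact Theory.Model.isSatisfiable M

open Classical in
/-- Renaming of variables. -/
noncomputable def ren {i : ℕ} (g : Fin i → KPTH L) : KPTH L → Fin (i + 1)
  | c => 0
  | f s => if h : ∃ j, g j = s then Fin.succ h.choose else 0
  | func _ _ => 0

open Classical in
/-- The valuation. -/
noncomputable def val {M : Type*} {k : ℕ} (g : Fin k → KPTH L) (x : M) (z : Fin k → M) :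
    KPTH L → M
  | c => x
  | f s => if h : ∃ j, g j = s then z h.choose else x
  | func _ _ => x

theorem val_f {M : Type*} {k : ℕ} (g : Fin k → KPTH L) (hg : Function.Injective g)
    (x : M) (z : Fin k → M) (j : Fin k) : val g x z (f (g j)) = z j := by
  have h : ∃ j', g j' = g j := ⟨j, rfl⟩
  rw [val, dif_pos h, hg h.choose_spec]

theorem ren_f {k : ℕ} (g : Fin k → KPTH L) (hg : Function.Injective g)
    (j : Fin k) : ren g (f (g j)) = j.succ := by
  have h : ∃ j', g j' = g j := ⟨j, rfl⟩
  rw [ren, dif_pos h, hg h.choose_spec]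

end KPTH

/-- **KPT witnessing theorem.** If a universal theory `T` proves
`∀x ∃y ∀z φ(x,y,z)` for a quantifier-free formula `φ`, then there are finitely
many terms `t₁(x), t₂(x,z₁), …, t_k(x,z₁,…,z_{k−1})` such that `T` proves
`∀x ∀z̄, ⋁ᵢ φ(x, tᵢ(x,z₁,…,z_{i−1}), zᵢ)`. -/
theorem kpt_witnessing {L : FirstOrder.Language.{u, v}} (T : L.Theory) (hT : T.IsUniversal)
    (φ : L.Formula (Fin 3)) (hφ : φ.IsQF)
    (h : ∀ (M : Type (max u v)) [L.Structure M] [Nonempty M], M ⊨ T →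
      ∀ x : M, ∃ y : M, ∀ z : M, φ.Realize ![x, y, z]) :
    ∃ k : ℕ, 0 < k ∧ ∃ t : (i : Fin k) → L.Term (Fin (i + 1)),
      ∀ (M : Type (max u v)) [L.Structure M] [Nonempty M], M ⊨ T →
        ∀ (x : M) (z : Fin k → M), ∃ i : Fin k,
          φ.Realize ![x,
            Term.realize (Fin.cases x fun j => z (Fin.castLE i.isLt.le j)) (t i),
            z i] := by
  classical
  obtain ⟨S, hS0, hS⟩ := KPTH.compact T φ (fun M _ hM e => KPTH.key T hT φ hφ h M hM e)
  obtain ⟨g, hginj, hmono, hgS⟩ : ∃ g : Fin S.card → KPTH L, Function.Injective g ∧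
      Monotone (KPTH.size ∘ g) ∧ ∀ t ∈ S, ∃ i, g i = t := by
    let g0 : Fin S.card → KPTH L := fun i => (S.equivFin.symm i : KPTH L)
    let σ := Tuple.sort (KPTH.size ∘ g0)
    refine ⟨g0 ∘ σ, ?_, Tuple.monotone_sort (KPTH.size ∘ g0), ?_⟩
    · exact (Subtype.val_injective.comp S.equivFin.symm.injective).comp σ.injective
    · intro t ht
      exact ⟨σ.symm (S.equivFin ⟨t, ht⟩), by simp [g0]⟩
  refine ⟨S.card, hS0.card_pos, fun i =>
    (KPTH.toTerm (g i)).relabel (KPTH.ren fun j : Fin i => g (Fin.castLE i.isLt.le j)), ?_⟩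
  intro M _ _ hM x z
  obtain ⟨t, htS, ht⟩ := hS M hM (KPTH.val g x z)
  obtain ⟨i, rfl⟩ := hgS t htS
  refine ⟨i, ?_⟩
  rw [KPTH.val_f g hginj] at ht
  rw [Term.realize_relabel]
  have hinj : Function.Injective (fun j : Fin i => g (Fin.castLE i.isLt.le j)) :=
    hginj.comp (Fin.castLE_injective _)
  rw [KPTH.realize_congr _ (KPTH.val g x z) (KPTH.size (g i)) ?_ ?_ _ le_rfl]
  · exact ht
  · rfl
  · intro s hs
    by_cases hj : ∃ j, g j = s
    · obtain ⟨j, rfl⟩ := hj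
      have hlt : j < i := by
        by_contra hle
        exact absurd (hmono (not_lt.1 hle)) (not_le.2 hs)
      have h1 := KPTH.ren_f _ hinj ⟨j, hlt⟩
      rw [KPTH.val_f g hginj, Function.comp_apply]
      have h2 : g (Fin.castLE i.isLt.le ⟨j, hlt⟩) = g j := rfl
      simp only [h2] at h1
      rw [h1]
      rfl
    · have hj' : ¬ ∃ j : Fin i, g (Fin.castLE i.isLt.le j) = s := fun ⟨j, h⟩ => hj ⟨_, h⟩
      rw [Function.comp_apply, KPTH.val, dif_neg hj, KPTH.ren, dif_neg hj']
      rfl
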